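/- Let (X,T) be an expansive topological dynamical system with metric d and expansive constant δ > 0. Then for every compact subset K ⊆ X, h(T,K) = s(d,T,δ/2,K), i.e. the topological entropy of K equals limsup_{n→∞} (1/n) log s_n(d,T,δ/2,K). -/

import Mathlib

/-!
Only the inequality `s(ε) ≤ s(δ / 2)` for every `ε > 0` has content. By compactness, expansivity is
uniform: there is `m` such that two points whose orbits are `δ`-close at all times in `(-m, m)` are
`ε`-close. Hence two orbits that are `δ`-close at all times in `(-m, n + m)` are `ε`-close at all
times in `[0, n)`.

Given an `(n, ε)`-separated set `E`, choose a maximal `(n + m, δ / 2)`-separated subset `F` of `E`,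
and a finite set `t`, depending on `m` only, such that every backward orbit is `δ / 2`-close to that
of a point of `t` at all times in `(-m, 0]`. Attaching to each point of `E` a point of `F` close to
it in the future and a point of `t` close to it in the past is injective, whence
`s_n(ε) ≤ |t| s_{n+m}(δ / 2)`; neither the factor `|t|` nor the shift by `m` affects the exponential
growth rate.
-/

open Filter Set Metric MeasureTheory
open scoped ENNReal Topology

noncomputable section

variable {X Y : Type*}

def IsSep [PseudoMetricSpace X] (T : X → X) (n : ℕ) (ε : ℝ) (E : Set X) : Prop :=
  E.Pairwise fun x y => ∃ i < n, ε < dist (T^[i] x) (T^[i] y)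

def sepMaxCard [PseudoMetricSpace X] (T : X → X) (n : ℕ) (ε : ℝ) (K : Set X) : ℝ≥0∞ :=
  ⨆ (E : Finset X) (_ : ↑E ⊆ K ∧ IsSep T n ε (↑E : Set X)), (E.card : ℝ≥0∞)

def sepEnt [PseudoMetricSpace X] (T : X → X) (ε : ℝ) (K : Set X) : EReal :=
  Filter.atTop.limsup fun n : ℕ => ENNReal.log (sepMaxCard T n ε K) / (n : EReal)

def subEnt [PseudoMetricSpace X] (T : X → X) (K : Set X) : EReal :=
  ⨆ (ε : ℝ) (_ : 0 < ε), sepEnt T ε K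

/-- `(X,T)` is lowerable. -/
def Lowerable [PseudoMetricSpace X] (T : X → X) : Prop :=
  ∀ h : EReal, 0 ≤ h → h ≤ subEnt T (univ : Set X) →
    ∃ K : Set X, K.Nonempty ∧ IsCompact K ∧ subEnt T K = h

/-- `(X,T)` is hereditarily lowerable. -/
def HerLowerable [PseudoMetricSpace X] (T : X → X) : Prop :=
  ∀ K : Set X, K.Nonempty → IsCompact K → ∀ h : EReal, 0 ≤ h → h ≤ subEnt T K →
    ∃ K' : Set X, K' ⊆ K ∧ K'.Nonempty ∧ IsCompact K' ∧ subEnt T K' = h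

/-- `(X,T)` is hereditarily uniformly lowerable: the lowering subset can moreover be chosen
with at most one limit (accumulation) point. -/
def HUL [PseudoMetricSpace X] (T : X → X) : Prop :=
  ∀ K : Set X, K.Nonempty → IsCompact K → ∀ h : EReal, 0 ≤ h → h ≤ subEnt T K →
    ∃ K' : Set X, K' ⊆ K ∧ K'.Nonempty ∧ IsCompact K' ∧ subEnt T K' = h ∧
      {x | AccPt x (𝓟 K')}.Subsingleton

/-- `Φ_ε(x) = {y : d(T^n x, T^n y) ≤ ε for all n ≥ 0}`. -/
def Phi [PseudoMetricSpace X] (T : X → X) (ε : ℝ) (x : X) : Set X :=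
  {y | ∀ n : ℕ, dist (T^[n] x) (T^[n] y) ≤ ε}

/-- `h*_T(ε) = sup_x h(T, Φ_ε(x))`. -/
def hStar [PseudoMetricSpace X] (T : X → X) (ε : ℝ) : EReal :=
  ⨆ x : X, subEnt T (Phi T ε x)

/-- `(X,T)` is asymptotically `h`-expansive: `h*_T(ε) → 0` as `ε → 0+`. -/
def AsympHExpansive [PseudoMetricSpace X] (T : X → X) : Prop :=
  Tendsto (fun ε : ℝ => hStar T ε) (𝓝[>] 0) (𝓝 (0 : EReal))

/-- `T^n` for `n : ℤ`, for a homeomorphism `T`. -/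
def iterZ [TopologicalSpace X] (T : X ≃ₜ X) : ℤ → X → X
  | Int.ofNat n => (⇑T)^[n]
  | Int.negSucc n => (⇑T.symm)^[n + 1]

/-- `T` is expansive with expansive constant `δ`. -/
def ExpansiveWith [MetricSpace X] (T : X ≃ₜ X) (δ : ℝ) : Prop :=
  ∀ x y : X, x ≠ y → ∃ n : ℤ, δ < dist (iterZ T n x) (iterZ T n y)

/-- `K ⪰ 𝒲` : `K` is contained in some member of the family `𝒲`. -/
def Refines (K : Set X) (W : Finset (Set X)) : Prop := ∃ A ∈ W, K ⊆ A

/-- The join `U ∨ V` of two finite covers. -/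
def covJoin (U V : Finset (Set X)) : Finset (Set X) :=
  letI := Classical.decEq (Set X)
  (U ×ˢ V).image fun p => p.1 ∩ p.2

/-- `dynCov T U n = U_0^{n-1} = ⋁_{i=0}^{n-1} T^{-i} U` (with `U_0^{-1} = {univ}`). -/
def dynCov (T : X → X) (U : Finset (Set X)) : ℕ → Finset (Set X)
  | 0 => {(univ : Set X)}
  | n + 1 =>
      letI := Classical.decEq (Set X)
      covJoin (dynCov T U n) (U.image fun A => T^[n] ⁻¹' A)

/-- `n_{T,U}(K)`: `0` if `K ⋠ U`; `+∞` if `T^i K ⪰ U` for all `i`; otherwise the largest `j`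
with `T^i K ⪰ U` for all `0 ≤ i ≤ j-1`. -/
def nTU (T : X → X) (U : Finset (Set X)) (K : Set X) : ℕ∞ :=
  ⨆ (j : ℕ) (_ : ∀ i < j, Refines (T^[i] '' K) U), (j : ℕ∞)

/-- `e^{-λ n}` for `n : ℕ∞`, valued in `ℝ≥0∞` (with the conventions `e^{-λ·∞} = 0` for `λ > 0`,
`= 1` for `λ = 0` and `= ∞` for `λ < 0`). -/
def expWeight (lam : ℝ) (n : ℕ∞) : ℝ≥0∞ :=
  if n = ⊤ then (if 0 < lam then 0 else if lam = 0 then 1 else ⊤)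
  else ENNReal.ofReal (Real.exp (-(lam * (n.toNat : ℝ))))

/-- `m_{T,U}(K,λ,k)`: the infimum of `∑_{E ∈ 𝓔} e^{-λ n_{T,U}(E)}` over all countable families
`𝓔` of subsets of `X` with `∪𝓔 ⊇ K` and `E ⪰ U_0^{k-1}` for every `E ∈ 𝓔`. -/
def mTU (T : X → X) (U : Finset (Set X)) (K : Set X) (lam : ℝ) (k : ℕ) : ℝ≥0∞ :=
  ⨅ (ℰ : Set (Set X)) (_ : ℰ.Countable ∧ K ⊆ ⋃₀ ℰ ∧ ∀ E ∈ ℰ, Refines E (dynCov T U k)),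
    ∑' E : ℰ, expWeight lam (nTU T U (E : Set X))

/-- `m_{T,U}(K,λ) = lim_{k→∞} m_{T,U}(K,λ,k)`; since `m_{T,U}(K,λ,k)` is nondecreasing in `k`,
the limit is the supremum. -/
def mTUlim (T : X → X) (U : Finset (Set X)) (K : Set X) (lam : ℝ) : ℝ≥0∞ :=
  ⨆ k : ℕ, mTU T U K lam k

/-- `h^B_U(T,K) = inf {λ : m_{T,U}(K,λ) = 0}`. -/
def hBU (T : X → X) (U : Finset (Set X)) (K : Set X) : EReal :=
  ⨅ (lam : ℝ) (_ : mTUlim T U K lam = 0), (lam : EReal)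

/-- The dimensional entropy `h^B(T,K) = sup_U h^B_U(T,K)`, supremum over finite open covers. -/
def hB [TopologicalSpace X] (T : X → X) (K : Set X) : EReal :=
  ⨆ (U : Finset (Set X)) (_ : (∀ A ∈ U, IsOpen A) ∧ ⋃₀ (↑U : Set (Set X)) = univ),
    hBU T U K

/-- `N(U,K)`: the minimal cardinality of a subfamily of `U` covering `K` (`0` for `K = ∅`,
`∞` if no subfamily covers `K`). -/
def covCard (U : Finset (Set X)) (K : Set X) : ℝ≥0∞ :=
  ⨅ (V : Finset (Set X)) (_ : V ⊆ U ∧ K ⊆ ⋃₀ (↑V : Set (Set X))), (V.card : ℝ≥0∞)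

/-- `h_U(T,K) = limsup_{n→∞} (1/n) log N(U_0^{n-1},K)`. -/
def hCov (T : X → X) (U : Finset (Set X)) (K : Set X) : EReal :=
  Filter.atTop.limsup fun n : ℕ => ENNReal.log (covCard (dynCov T U n) K) / (n : EReal)

/-- Topological entropy of a subset via open covers: `h(T,K) = sup_U h_U(T,K)`. -/
def hCovSup [TopologicalSpace X] (T : X → X) (K : Set X) : EReal :=
  ⨆ (U : Finset (Set X)) (_ : (∀ A ∈ U, IsOpen A) ∧ ⋃₀ (↑U : Set (Set X)) = univ),
    hCov T U K

/-- The atom of the (finite) partition `P` containing `x`. -/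
def atomAt (P : Finset (Set X)) (x : X) : Set X := ⋃₀ {A | A ∈ P ∧ x ∈ A}

/-- `P` is a finite Borel partition. -/
def IsFinPartition [MeasurableSpace X] (P : Finset (Set X)) : Prop :=
  (∀ A ∈ P, MeasurableSet A) ∧ ⋃₀ (↑P : Set (Set X)) = univ ∧
    (↑P : Set (Set X)).Pairwise fun A B => Disjoint A B

/-- The Shannon entropy `H_μ(P) = ∑_{A ∈ P} -μ(A) log μ(A)` of a finite partition. -/
def partEnt [MeasurableSpace X] (μ : Measure X) (P : Finset (Set X)) : ℝ :=
  ∑ A ∈ P, -((μ A).toReal * Real.log (μ A).toReal)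

/-- The measure-theoretic (Kolmogorov–Sinai) entropy `h_μ(T)`: the supremum over finite Borel
partitions `P` of `lim_n (1/n) H_μ(P_0^{n-1})`; by subadditivity this limit is the infimum. -/
def ksEntropy [MeasurableSpace X] (T : X → X) (μ : Measure X) : EReal :=
  ⨆ (P : Finset (Set X)) (_ : IsFinPartition P),
    ⨅ n : ℕ, ((partEnt μ (dynCov T P (n + 1)) / (n + 1) : ℝ) : EReal)

/-- `π` is a principal factor map from `(X,T)` to `(Y,S)` : `h_μ(T) = h_{πμ}(S)` for every
`T`-invariant Borel probability measure `μ`. -/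
def IsPrincipal [MeasurableSpace X] [MeasurableSpace Y] (T : X → X) (S : Y → Y)
    (π : X → Y) : Prop :=
  ∀ μ : Measure X, IsProbabilityMeasure μ → Measure.map T μ = μ →
    ksEntropy T μ = ksEntropy S (Measure.map π μ)

/-- The relative topological entropy `h_top(T,X|π) = sup_{y ∈ Y} h(T, π^{-1}(y))`. -/
def relEnt [PseudoMetricSpace X] (T : X → X) (π : X → Y) : EReal :=
  ⨆ y : Y, subEnt T (π ⁻¹' {y})

/-- The canonical conversion `EReal → ℝ≥0∞` (`⊥` and negative reals go to `0`). -/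
def erealToENNReal (x : EReal) : ℝ≥0∞ := if x = ⊤ then ⊤ else ENNReal.ofReal x.toReal

open Dynamics ExpGrowth
open scoped SetRel Uniformity

section Relations

variable {R S U : SetRel X X}

lemma exists_subset_isSeparated_isCover [R.IsRefl] [R.IsSymm] (E : Finset X) :
    ∃ F ⊆ E, R.IsSeparated (F : Set X) ∧ R.IsCover (E : Set X) (F : Set X) := by
  have hfin : {N : Set X | N ⊆ E ∧ R.IsSeparated N}.Finite :=
    E.finite_toSet.finite_subsets.subset fun _ hN => hN.1
  obtain ⟨N, hN⟩ := hfin.exists_maximal ⟨∅, empty_subset _, .empty⟩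
  lift N to Finset X using E.finite_toSet.subset hN.prop.1
  exact ⟨N, mod_cast hN.prop.1, hN.prop.2, .of_maximal_isSeparated hN⟩

lemma card_le_card_mul_card_of_isCover [S.IsSymm] [U.IsSymm] {E F G : Finset X}
    (hE : R.IsSeparated (E : Set X)) (hF : S.IsCover (E : Set X) (F : Set X))
    (hG : U.IsCover (E : Set X) (G : Set X)) (hR : (S ○ S) ∩ (U ○ U) ⊆ R) :
    E.card ≤ F.card * G.card := by
  obtain rfl | ⟨x₀, -⟩ := E.eq_empty_or_nonempty
  · simp
  have : Nonempty X := ⟨x₀⟩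
  choose! f hfF hf using fun x (hx : x ∈ E) => hF hx
  choose! g hgG hg using fun x (hx : x ∈ E) => hG hx
  rw [← Finset.card_product]
  refine Finset.card_le_card_of_injOn (fun x => (f x, g x))
    (fun x hx => Finset.mem_product.2 ⟨hfF x hx, hgG x hx⟩) fun x hx y hy hxy => ?_
  obtain ⟨hfxy, hgxy⟩ := Prod.mk.inj hxy
  by_contra hne
  exact hE hx hy hne <| hR
    ⟨⟨f x, hf x hx, S.symm (hfxy ▸ hf y hy)⟩, ⟨g x, hg x hx, U.symm (hgxy ▸ hg y hy)⟩⟩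

end Relations

section DistLE

variable [PseudoMetricSpace X] {ε δ : ℝ}

/-- The entourage of pairs of points at distance at most `ε`. Its dynamical entourages are the
relations `d_n(x, y) ≤ ε`. -/
def distLE (X : Type*) [PseudoMetricSpace X] (ε : ℝ) : SetRel X X := {p | dist p.1 p.2 ≤ ε}

lemma isRefl_distLE (hε : 0 ≤ ε) : (distLE X ε).IsRefl := ⟨fun x => (dist_self x).trans_le hε⟩

instance isSymm_distLE : (distLE X ε).IsSymm := ⟨fun x y h => (dist_comm y x).trans_le h⟩

lemma distLE_mem_uniformity (hε : 0 < ε) : distLE X ε ∈ 𝓤 X :=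
  mem_of_superset (dist_mem_uniformity hε) fun _ => le_of_lt (α := ℝ)

lemma isClosed_distLE : IsClosed (distLE X ε) := isClosed_le continuous_dist continuous_const

lemma distLE_comp_distLE_subset : distLE X ε ○ distLE X δ ⊆ distLE X (ε + δ) :=
  fun _ ⟨_, h₁, h₂⟩ => (dist_triangle _ _ _).trans (add_le_add h₁ h₂)

lemma dynEntourage_distLE_comp_subset {T : X → X} {n : ℕ} :
    dynEntourage T (distLE X ε) n ○ dynEntourage T (distLE X δ) n ⊆
      dynEntourage T (distLE X (ε + δ)) n :=
  (dynEntourage_comp_subset ..).trans (dynEntourage_monotone T n distLE_comp_distLE_subset)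

lemma isSep_iff_isSeparated {T : X → X} {n : ℕ} {E : Set X} :
    IsSep T n ε E ↔ (dynEntourage T (distLE X ε) n).IsSeparated E := by
  simp [IsSep, SetRel.IsSeparated, mem_dynEntourage, distLE]

end DistLE

lemma isClosed_dynEntourage [TopologicalSpace X] {T : X → X} {V : SetRel X X} (hT : Continuous T)
    (hV : IsClosed V) (n : ℕ) : IsClosed (dynEntourage T V n) :=
  isClosed_iInter fun k => isClosed_iInter fun _ => hV.preimage ((hT.prodMap hT).iterate k)

lemma dynEntourage_add_inter_dynEntourage_symm_subset (T : X ≃ X) {V W : SetRel X X} {m : ℕ}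
    (h : dynEntourage T V m ∩ dynEntourage T.symm V m ⊆ W) (n : ℕ) :
    dynEntourage T V (n + m) ∩ dynEntourage T.symm V m ⊆ dynEntourage T W n := by
  rintro ⟨x, y⟩ ⟨hfut, hpast⟩
  simp only [mem_dynEntourage] at hfut hpast ⊢
  refine fun i hi => h ⟨mem_dynEntourage.2 fun j hj => ?_, mem_dynEntourage.2 fun j hj => ?_⟩
  · simpa only [Function.iterate_add_apply] using hfut (j + i) (by omega)
  have cancel (k : ℕ) : Function.LeftInverse T.symm^[k] T^[k] := T.leftInverse_symm.iterate k
  obtain ⟨k, rfl⟩ | ⟨k, rfl⟩ := (le_total j i).imp Nat.exists_eq_add_of_le Nat.exists_eq_add_of_le'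
  · simpa only [Function.iterate_add_apply, cancel j _] using hfut k (by omega)
  · simpa only [Function.iterate_add_apply, cancel i _] using hpast k (by omega)

namespace ExpansiveWith

variable [MetricSpace X] {T : X ≃ₜ X} {δ : ℝ}

lemma iInter_dynEntourage_subset_id (hT : ExpansiveWith T δ) :
    ⋂ m, dynEntourage T (distLE X δ) m ∩ dynEntourage T.symm (distLE X δ) m ⊆ SetRel.id := by
  rintro ⟨x, y⟩ hxy
  simp only [mem_iInter, mem_inter_iff, mem_dynEntourage] at hxy
  by_contra hne
  obtain ⟨k | k, hk⟩ := hT x y hne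
  · exact hk.not_ge ((hxy (k + 1)).1 k (by omega))
  · exact hk.not_ge ((hxy (k + 2)).2 (k + 1) (by omega))

lemma exists_dynEntourage_inter_subset [CompactSpace X] (hT : ExpansiveWith T δ) {W : SetRel X X}
    (hW : W ∈ 𝓤 X) :
    ∃ m, dynEntourage T (distLE X δ) m ∩ dynEntourage T.symm (distLE X δ) m ⊆ W := by
  refine exists_subset_nhds_of_isCompact (Antitone.directed_ge fun _ _ hmn => ?_) (fun m => ?_) ?_
  · exact inter_subset_inter (dynEntourage_antitone _ _ hmn) (dynEntourage_antitone _ _ hmn)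
  · exact ((isClosed_dynEntourage T.continuous isClosed_distLE m).inter
      (isClosed_dynEntourage T.symm.continuous isClosed_distLE m)).isCompact
  · rintro ⟨x, y⟩ hxy
    obtain rfl : x = y := hT.iInter_dynEntourage_subset_id hxy
    exact nhds_le_uniformity x hW

end ExpansiveWith

section SepMaxCard

variable [PseudoMetricSpace X] {T : X → X} {n : ℕ} {ε : ℝ} {K : Set X}

lemma card_le_sepMaxCard {E : Finset X} (hEK : ↑E ⊆ K) (hE : IsSep T n ε (E : Set X)) :
    (E.card : ℝ≥0∞) ≤ sepMaxCard T n ε K :=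
  le_iSup₂ (f := fun (E : Finset X) (_ : ↑E ⊆ K ∧ IsSep T n ε (E : Set X)) => (E.card : ℝ≥0∞))
    E ⟨hEK, hE⟩

lemma sepMaxCard_monotone_time : Monotone fun n => sepMaxCard T n ε K := fun _ _ hmn =>
  iSup₂_le fun _ hE => card_le_sepMaxCard hE.1 <| hE.2.mono' fun _ _ ⟨i, hi, h⟩ =>
    ⟨i, hi.trans_le hmn, h⟩

end SepMaxCard

lemma ExpansiveWith.exists_sepMaxCard_le [MetricSpace X] [CompactSpace X] {T : X ≃ₜ X} {δ ε : ℝ}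
    (hT : ExpansiveWith T δ) (hδ : 0 < δ) (hε : 0 < ε) (K : Set X) :
    ∃ m c : ℕ, ∀ n, sepMaxCard T n ε K ≤ c * sepMaxCard T (n + m) (δ / 2) K := by
  obtain ⟨m, hm⟩ := hT.exists_dynEntourage_inter_subset (distLE_mem_uniformity hε)
  obtain ⟨t, ht⟩ := exists_isDynCoverOf_of_isCompact_uniformContinuous isCompact_univ
    (CompactSpace.uniformContinuous_of_continuous T.symm.continuous)
    (distLE_mem_uniformity (X := X) (half_pos hδ)) m
  rw [← add_halves δ] at hm
  refine ⟨m, t.card, fun n => iSup₂_le fun E hE => ?_⟩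
  have := isRefl_distLE (X := X) (half_pos hδ).le
  obtain ⟨F, hFE, hFsep, hF⟩ :=
    exists_subset_isSeparated_isCover (R := dynEntourage T (distLE X (δ / 2)) (n + m)) E
  have hcard : E.card ≤ F.card * t.card :=
    card_le_card_mul_card_of_isCover (isSep_iff_isSeparated.1 hE.2) hF (ht.anti (subset_univ _)) <|
      (inter_subset_inter dynEntourage_distLE_comp_subset dynEntourage_distLE_comp_subset).trans <|
        dynEntourage_add_inter_dynEntourage_symm_subset T.toEquiv hm n
  calc (E.card : ℝ≥0∞) ≤ t.card * F.card := by rw [mul_comm]; exact_mod_cast hcard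
    _ ≤ t.card * sepMaxCard T (n + m) (δ / 2) K := by
      gcongr
      exact card_le_sepMaxCard ((Finset.coe_subset.2 hFE).trans hE.1)
        (isSep_iff_isSeparated.2 hFsep)

lemma expGrowthSup_comp_add_right {u : ℕ → ℝ≥0∞} (hu : Monotone u) (m : ℕ) :
    expGrowthSup (fun n => u (n + m)) = expGrowthSup u := by
  have hlim : Tendsto (fun n : ℕ => ((n + m : ℕ) : EReal) / n) atTop (𝓝 1) := by
    have hreal : Tendsto (fun n : ℕ => ((n + m : ℕ) : ℝ) / n) atTop (𝓝 1) := by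
      simpa [add_comm] using tendsto_add_mul_div_add_mul_atTop_nhds (m : ℝ) 0 1 one_ne_zero
    exact (continuous_coe_real_ereal.tendsto 1).comp hreal
  exact (hu.expGrowthSup_comp hlim one_ne_zero (EReal.coe_ne_top 1)).trans (one_mul _)

theorem expansive_entropy_eq_sep_general [MetricSpace X] [CompactSpace X] (T : X ≃ₜ X) (δ : ℝ)
    (hδ : 0 < δ) (hexp : ExpansiveWith T δ) (K : Set X) :
    subEnt T K = sepEnt T (δ / 2) K := by
  refine le_antisymm (iSup₂_le fun ε hε => ?_)
    (le_iSup₂ (f := fun (ε : ℝ) (_ : 0 < ε) => sepEnt T ε K) (δ / 2) (half_pos hδ))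
  obtain ⟨m, c, hc⟩ := hexp.exists_sepMaxCard_le hδ hε K
  calc sepEnt T ε K
      ≤ expGrowthSup fun n => sepMaxCard T (n + m) (δ / 2) K :=
        expGrowthSup_le_of_eventually_le (ENNReal.natCast_ne_top c) (.of_forall hc)
    _ = sepEnt T (δ / 2) K := expGrowthSup_comp_add_right sepMaxCard_monotone_time m

/-- If `(X,T)` is expansive with expansive constant `δ > 0`, then for every
compact `K ⊆ X`, `h(T,K) = s(d,T,δ/2,K)`. -/
theorem expansive_entropy_eq_sep {X : Type*} [MetricSpace X] [CompactSpace X]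
    (T : X ≃ₜ X) (δ : ℝ) (hδ : 0 < δ) (hexp : ExpansiveWith T δ)
    (K : Set X) (hK : IsCompact K) :
    subEnt (⇑T) K = sepEnt (⇑T) (δ / 2) K :=
  expansive_entropy_eq_sep_general T δ hδ hexp K
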